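/- Let θ > 0, t > 0 and f ∈ 𝒮. Then P_t f ∈ 𝒟(𝒜); that is: P_t f is C² on (0,∞), continuous on [0,∞) with lim_{x→∞} P_t f(x) = 0, the one-sided limits (P_t f)'(0⁺) and (P_t f)''(0⁺) exist and are finite, (P_t f)''(0⁺) = 2θ·(P_t f)'(0⁺), and lim_{x→∞} (P_t f)''(x) = 0. -/

import Mathlib

open MeasureTheory Real Filter Set

/-- Complementary error function `erfc(x) = (2/√π)·∫_x^∞ e^{−y²} dy`. -/
noncomputable def erfc (x : ℝ) : ℝ :=
  (2 / Real.sqrt Real.pi) * ∫ y in Set.Ioi x, Real.exp (-y ^ 2)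

/-- `g_t(x) = θ·exp(2θx + 2θ²t)·erfc(x/√(2t) + θ·√(2t))`. -/
noncomputable def gfun (θ t x : ℝ) : ℝ :=
  θ * Real.exp (2 * θ * x + 2 * θ ^ 2 * t) *
    erfc (x / Real.sqrt (2 * t) + θ * Real.sqrt (2 * t))

/-- The Gaussian kernel `p_t(x,y) = (2πt)^{−1/2}·exp(−(y−x)²/(2t))`. -/
noncomputable def pker (t x y : ℝ) : ℝ :=
  (Real.sqrt (2 * Real.pi * t))⁻¹ * Real.exp (-(y - x) ^ 2 / (2 * t))

/-- The sticky Brownian motion semigroup: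
`P_t f(x) = ∫_0^∞ (p_t(x,y) − p_t(x,−y) + 2 g_t(x+y)) f(y) dy + (1/θ) g_t(x) f(0)`. -/
noncomputable def Pt (θ t : ℝ) (f : ℝ → ℝ) (x : ℝ) : ℝ :=
  (∫ y in Set.Ioi (0:ℝ), (pker t x y - pker t x (-y) + 2 * gfun θ t (x + y)) * f y)
    + (1 / θ) * gfun θ t x * f 0

/-- `f ∈ 𝒮`: `f` is C² on `(0,∞)`, the one-sided limits `f(0⁺)`, `f'(0⁺)`, `f''(0⁺)` exist
and are finite, and `lim_{x→∞} f(x) = 0`. -/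
def memS (f : ℝ → ℝ) : Prop :=
  ContDiffOn ℝ 2 f (Set.Ioi 0) ∧
  (∃ a : ℝ, Filter.Tendsto f (nhdsWithin 0 (Set.Ioi 0)) (nhds a)) ∧
  (∃ b : ℝ, Filter.Tendsto (deriv f) (nhdsWithin 0 (Set.Ioi 0)) (nhds b)) ∧
  (∃ c : ℝ, Filter.Tendsto (deriv (deriv f)) (nhdsWithin 0 (Set.Ioi 0)) (nhds c)) ∧
  Filter.Tendsto f Filter.atTop (nhds 0)

/-! With `hankel φ f x = ∫₀^∞ φ (y + x) f y dy`, `p = p_t(0, ·)` and `g = g_t`, the semigroup reads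
`P_t f x = hankel p f (-x) - hankel p f x + 2 hankel g f x + θ⁻¹ g x f 0`.
Both kernels decay exponentially at `+∞` together with all their derivatives (for `g`, because
`erfc x = O(exp (-x²))` and completing the square give `g = O(p)`), so a Hankel transform may be
differentiated under the integral sign and tends to `0` at `+∞`; the convolution term
`hankel p f (-x)` tends to `0` because `p` is integrable and `f` vanishes at infinity.

The boundary condition comes from `g' = 2θ (g - p)`. At `x = 0` the first two terms of `(P_t f)'`
add up to `-2 hankel p' f 0` and those of `(P_t f)''` cancel, while `g'' = 2θ (g' - p')` turns the
`g` terms of `(P_t f)''` into `2θ` times `2 hankel g' f 0 - 2 hankel p' f 0 + θ⁻¹ g' 0 f 0`, since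
`p' 0 = 0`. This is `2θ (P_t f)' 0`. -/

open Asymptotics Polynomial
open scoped Topology ENNReal

section General

lemma exists_ae_norm_le_of_memLp_top {α E : Type*} [MeasurableSpace α] [NormedAddCommGroup E]
    {μ : Measure α} {f : α → E} (hf : MemLp f ∞ μ) : ∃ B, ∀ᵐ x ∂μ, ‖f x‖ ≤ B := by
  refine ⟨(eLpNorm f ∞ μ).toReal, ?_⟩
  filter_upwards [ae_le_eLpNormEssSup (f := f) (μ := μ)] with x hx
  rw [← toReal_enorm]
  exact ENNReal.toReal_mono hf.2.ne (hx.trans_eq eLpNorm_exponent_top.symm)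

lemma exists_norm_le_Ioi_of_tendsto {E : Type*} [NormedAddCommGroup E] {f : ℝ → E} {a : ℝ}
    {l l' : E} (hf : ContinuousOn f (Ioi a)) (ha : Tendsto f (𝓝[>] a) (𝓝 l))
    (htop : Tendsto f atTop (𝓝 l')) : ∃ B, ∀ y ∈ Ioi a, ‖f y‖ ≤ B := by
  obtain ⟨s, hs, hs_bdd⟩ := Metric.exists_isBounded_image_of_tendsto ha
  obtain ⟨u, hu, hu_bdd⟩ := Metric.exists_isBounded_image_of_tendsto htop
  obtain ⟨c, hac, hcs⟩ := mem_nhdsGT_iff_exists_Ioo_subset.1 hs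
  obtain ⟨d, hdu⟩ := mem_atTop_sets.1 hu
  have hmid : Bornology.IsBounded (f '' Icc c d) :=
    (isCompact_Icc.image_of_continuousOn
      (hf.mono fun y hy => lt_of_lt_of_le hac hy.1)).isBounded
  obtain ⟨B, hB⟩ := ((hs_bdd.union hmid).union hu_bdd).exists_norm_le
  refine ⟨B, fun y hy => hB _ ?_⟩
  rcases lt_or_ge y c with hyc | hcy
  · exact .inl (.inl (mem_image_of_mem f (hcs ⟨hy, hyc⟩)))
  rcases le_total y d with hyd | hdy
  · exact .inl (.inr (mem_image_of_mem f ⟨hcy, hyd⟩))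
  · exact .inr (mem_image_of_mem f (hdu y hdy))

lemma hasDerivAt_integral_Ioi {E : Type*} [NormedAddCommGroup E] [NormedSpace ℝ E]
    [CompleteSpace E] {h : ℝ → E} (hi : Integrable h) (hc : Continuous h) (x : ℝ) :
    HasDerivAt (fun x => ∫ y in Ioi x, h y) (-h x) x := by
  have h_split : (fun x => ∫ y in Ioi x, h y) =
      fun x => (∫ y in Ioi 0, h y) - ∫ y in (0 : ℝ)..x, h y := by
    ext x
    rw [← intervalIntegral.integral_Ioi_sub_Ioi' hi.integrableOn hi.integrableOn, sub_sub_cancel]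
  rw [h_split]
  exact (hc.integral_hasStrictDerivAt 0 x).hasDerivAt.const_sub _

end General

/-- `C^n` functions whose derivatives up to order `n` decay like `exp (-b z)` as `z → ∞`; nothing
is required as `z → -∞`. -/
structure HasExpDecay (b : ℝ) (n : ℕ) (φ : ℝ → ℝ) : Prop where
  contDiff : ContDiff ℝ n φ
  isBigO_iteratedDeriv : ∀ k ≤ n, iteratedDeriv k φ =O[atTop] fun z => exp (-b * z)

namespace HasExpDecay

variable {b : ℝ} {n m : ℕ} {φ ψ : ℝ → ℝ}

lemma isBigO (hφ : HasExpDecay b n φ) : φ =O[atTop] fun z => exp (-b * z) := by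
  simpa using hφ.isBigO_iteratedDeriv 0 n.zero_le

lemma of_le (hφ : HasExpDecay b n φ) (h : m ≤ n) : HasExpDecay b m φ :=
  ⟨hφ.contDiff.of_le (by exact_mod_cast h), fun k hk => hφ.isBigO_iteratedDeriv k (hk.trans h)⟩

lemma zero_iff : HasExpDecay b 0 φ ↔ Continuous φ ∧ φ =O[atTop] fun z => exp (-b * z) :=
  ⟨fun h => ⟨h.contDiff.continuous, h.isBigO⟩,
    fun h => ⟨by simpa [contDiff_zero] using h.1, by simpa using h.2⟩⟩

lemma succ_iff : HasExpDecay b (n + 1) φ ↔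
    Differentiable ℝ φ ∧ (φ =O[atTop] fun z => exp (-b * z)) ∧ HasExpDecay b n (deriv φ) := by
  constructor
  · intro h
    obtain ⟨hd, -, hd'⟩ := contDiff_succ_iff_deriv.1
      (show ContDiff ℝ ((n : WithTop ℕ∞) + 1) φ by exact_mod_cast h.contDiff)
    refine ⟨hd, h.isBigO, hd', fun k hk => ?_⟩
    rw [← iteratedDeriv_succ']
    exact h.isBigO_iteratedDeriv (k + 1) (by lia)
  · rintro ⟨hd, hO, h⟩
    refine ⟨by exact_mod_cast contDiff_succ_iff_deriv.2 ⟨hd, by simp, h.contDiff⟩, ?_⟩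
    rintro (_ | k) hk
    · simpa using hO
    · rw [iteratedDeriv_succ']
      exact h.isBigO_iteratedDeriv k (by lia)

lemma sub (hφ : HasExpDecay b n φ) (hψ : HasExpDecay b n ψ) :
    HasExpDecay b n (fun z => φ z - ψ z) := by
  refine ⟨hφ.contDiff.sub hψ.contDiff, fun k hk => ?_⟩
  have h_iter : iteratedDeriv k (fun z => φ z - ψ z) = iteratedDeriv k φ - iteratedDeriv k ψ := by
    ext z
    have hk' : (k : WithTop ℕ∞) ≤ n := by exact_mod_cast hk
    exact iteratedDeriv_sub (hφ.contDiff.of_le hk').contDiffAt (hψ.contDiff.of_le hk').contDiffAt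
  rw [h_iter]
  exact (hφ.isBigO_iteratedDeriv k hk).sub (hψ.isBigO_iteratedDeriv k hk)

lemma const_mul (hφ : HasExpDecay b n φ) (c : ℝ) : HasExpDecay b n (fun z => c * φ z) := by
  refine ⟨contDiff_const.mul hφ.contDiff, fun k hk => ?_⟩
  simpa [funext fun z => iteratedDeriv_const_mul_field (n := k) (x := z) c φ] using
    (hφ.isBigO_iteratedDeriv k hk).const_mul_left c

lemma tendsto_atTop (hb : 0 < b) (hφ : HasExpDecay b n φ) : Tendsto φ atTop (𝓝 0) :=
  hφ.isBigO.trans_tendsto <|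
    tendsto_exp_atBot.comp (tendsto_id.const_mul_atTop_of_neg (neg_lt_zero.2 hb))

lemma exists_norm_le_Ici (hφ : HasExpDecay b n φ) (a : ℝ) :
    ∃ C, ∀ z ≥ a, ‖φ z‖ ≤ C * exp (-b * z) := by
  obtain ⟨C, hC⟩ := hφ.isBigO.bound
  obtain ⟨R, hR⟩ := eventually_atTop.1 hC
  have hcont : Continuous fun z => φ z * exp (b * z) := hφ.contDiff.continuous.mul (by fun_prop)
  obtain ⟨K, hK⟩ := isCompact_Icc.exists_bound_of_continuousOn (s := Icc a R) hcont.continuousOn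
  refine ⟨max C K, fun z hz => ?_⟩
  rcases le_total R z with hRz | hzR
  · refine (hR z hRz).trans ?_
    rw [norm_of_nonneg (exp_pos _).le]
    gcongr
    exact le_max_left C K
  · have hK' : ‖φ z‖ ≤ K * exp (-b * z) := by
      rw [neg_mul, exp_neg, ← div_eq_mul_inv, le_div_iff₀ (exp_pos _)]
      simpa [norm_mul] using hK z ⟨hz, hzR⟩
    exact hK'.trans (by gcongr; exact le_max_right C K)

end HasExpDecay

/-- The Hankel operator with kernel `φ`. At `-x` it is the half-line convolution
`∫₀^∞ φ (y - x) f y dy`. -/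
noncomputable def hankel (φ f : ℝ → ℝ) (x : ℝ) : ℝ := ∫ y in Ioi (0 : ℝ), φ (y + x) * f y

section Hankel

variable {b : ℝ} {n : ℕ} {φ f : ℝ → ℝ}

lemma aestronglyMeasurable_shift_mul (hφ : Continuous φ)
    (hf : MemLp f ∞ (volume.restrict (Ioi 0))) (x : ℝ) :
    AEStronglyMeasurable (fun y => φ (y + x) * f y) (volume.restrict (Ioi 0)) :=
  (hφ.comp (continuous_add_const x)).aestronglyMeasurable.mul hf.1

lemma HasExpDecay.exists_integrable_bound (hb : 0 < b) (hφ : HasExpDecay b n φ)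
    (hf : MemLp f ∞ (volume.restrict (Ioi 0))) (a : ℝ) :
    ∃ bound, Integrable bound (volume.restrict (Ioi (0 : ℝ))) ∧
      ∀ᵐ y ∂volume.restrict (Ioi 0), ∀ x ≥ a, ‖φ (y + x) * f y‖ ≤ bound y := by
  obtain ⟨C, hC⟩ := hφ.exists_norm_le_Ici a
  have hC0 : 0 ≤ C := nonneg_of_mul_nonneg_left ((norm_nonneg _).trans (hC a le_rfl)) (exp_pos _)
  refine ⟨fun y => (C * exp (-b * a) * exp (-b * y)) * ‖f y‖,
    ((integrableOn_exp_mul_Ioi (neg_lt_zero.2 hb) 0).const_mul _).mul_of_top_left hf.norm, ?_⟩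
  refine ae_restrict_of_forall_mem measurableSet_Ioi fun y hy x hx => ?_
  rw [norm_mul]
  refine mul_le_mul_of_nonneg_right ?_ (norm_nonneg _)
  calc ‖φ (y + x)‖ ≤ C * exp (-b * (y + x)) := hC _ (by linarith [mem_Ioi.1 hy])
    _ = C * exp (-b * x) * exp (-b * y) := by rw [mul_assoc, ← exp_add]; ring_nf
    _ ≤ C * exp (-b * a) * exp (-b * y) := by
      gcongr C * ?_ * _
      exact exp_le_exp.2 (mul_le_mul_of_nonpos_left hx (neg_nonpos.2 hb.le))

lemma HasExpDecay.integrable_shift_mul (hb : 0 < b) (hφ : HasExpDecay b n φ)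
    (hf : MemLp f ∞ (volume.restrict (Ioi 0))) (x : ℝ) :
    Integrable (fun y => φ (y + x) * f y) (volume.restrict (Ioi 0)) := by
  obtain ⟨bound, hint, hle⟩ := hφ.exists_integrable_bound hb hf x
  exact hint.mono' (aestronglyMeasurable_shift_mul hφ.contDiff.continuous hf x)
    (hle.mono fun y hy => hy x le_rfl)

lemma hankel_const_mul_sub {ψ : ℝ → ℝ} (hb : 0 < b) (hφ : HasExpDecay b n φ)
    (hψ : HasExpDecay b n ψ) (hf : MemLp f ∞ (volume.restrict (Ioi 0))) (c x : ℝ) :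
    hankel (fun z => c * (φ z - ψ z)) f x = c * (hankel φ f x - hankel ψ f x) := by
  simp only [hankel, mul_assoc, sub_mul, integral_const_mul]
  rw [integral_sub (hφ.integrable_shift_mul hb hf x) (hψ.integrable_shift_mul hb hf x)]

lemma continuous_hankel (hb : 0 < b) (hφ : HasExpDecay b n φ)
    (hf : MemLp f ∞ (volume.restrict (Ioi 0))) : Continuous (hankel φ f) := by
  rw [continuous_iff_continuousAt]
  intro x₀
  have hφc := hφ.contDiff.continuous
  obtain ⟨bound, hint, hle⟩ := hφ.exists_integrable_bound hb hf (x₀ - 1)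
  refine continuousAt_of_dominated
    (Eventually.of_forall (aestronglyMeasurable_shift_mul hφc hf)) ?_ hint ?_
  · filter_upwards [Ici_mem_nhds (sub_one_lt x₀)] with x hx
    exact hle.mono fun y hy => hy x hx
  · exact Eventually.of_forall fun y => by fun_prop

lemma hasDerivAt_hankel (hb : 0 < b) (hφ : HasExpDecay b 1 φ)
    (hf : MemLp f ∞ (volume.restrict (Ioi 0))) (x₀ : ℝ) :
    HasDerivAt (hankel φ f) (hankel (deriv φ) f x₀) x₀ := by
  obtain ⟨hdiff, -, hφ'⟩ := HasExpDecay.succ_iff.1 hφ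
  obtain ⟨bound, hint, hle⟩ := hφ'.exists_integrable_bound hb hf (x₀ - 1)
  refine (hasDerivAt_integral_of_dominated_loc_of_deriv_le (Ici_mem_nhds (sub_one_lt x₀))
    (Eventually.of_forall (aestronglyMeasurable_shift_mul hdiff.continuous hf))
    (hφ.integrable_shift_mul hb hf x₀)
    (aestronglyMeasurable_shift_mul hφ'.contDiff.continuous hf x₀)
    hle hint (Eventually.of_forall fun y x _ => ?_)).2
  exact ((hdiff (y + x)).hasDerivAt.comp_const_add y x).mul_const (f y)

lemma hasDerivAt_hankel_neg (hb : 0 < b) (hφ : HasExpDecay b 1 φ)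
    (hf : MemLp f ∞ (volume.restrict (Ioi 0))) (x : ℝ) :
    HasDerivAt (fun x => hankel φ f (-x)) (-hankel (deriv φ) f (-x)) x :=
  ((hasDerivAt_hankel hb hφ hf (-x)).comp x (hasDerivAt_neg x)).congr_deriv (mul_neg_one _)

lemma contDiff_hankel (hb : 0 < b) (hφ : HasExpDecay b n φ)
    (hf : MemLp f ∞ (volume.restrict (Ioi 0))) : ContDiff ℝ n (hankel φ f) := by
  induction n generalizing φ with
  | zero => simpa [contDiff_zero] using continuous_hankel hb hφ hf
  | succ n ih =>
    have hderiv := hasDerivAt_hankel hb (hφ.of_le n.succ_pos) hf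
    have hcd := ih (HasExpDecay.succ_iff.1 hφ).2.2
    rw [← funext fun x => (hderiv x).deriv] at hcd
    exact_mod_cast contDiff_succ_iff_deriv.2
      ⟨fun x => (hderiv x).differentiableAt, by simp, hcd⟩

lemma tendsto_hankel_atTop (hb : 0 < b) (hφ : HasExpDecay b n φ)
    (hf : MemLp f ∞ (volume.restrict (Ioi 0))) : Tendsto (hankel φ f) atTop (𝓝 0) := by
  obtain ⟨bound, hint, hle⟩ := hφ.exists_integrable_bound hb hf 0
  have hlim (y : ℝ) : Tendsto (fun x => φ (y + x) * f y) atTop (𝓝 0) := by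
    simpa using ((hφ.tendsto_atTop hb).comp
      (tendsto_atTop_add_const_left _ y tendsto_id)).mul_const (f y)
  have h := tendsto_integral_filter_of_dominated_convergence bound
    (Eventually.of_forall (aestronglyMeasurable_shift_mul hφ.contDiff.continuous hf))
    ((eventually_ge_atTop 0).mono fun x hx => hle.mono fun y hy => hy x hx) hint
    (Eventually.of_forall hlim)
  rwa [integral_zero] at h

lemma hankel_neg_eq_integral (φ f : ℝ → ℝ) (x : ℝ) :
    hankel φ f (-x) = ∫ z, φ z * (Ioi 0).indicator f (z + x) := by
  rw [hankel, ← integral_indicator measurableSet_Ioi, ← integral_add_right_eq_self _ x]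
  simp only [indicator_mul_right, add_neg_cancel_right]

lemma tendsto_hankel_neg_atTop (hφ : Integrable φ) (hf : MemLp f ∞ (volume.restrict (Ioi 0)))
    (htop : Tendsto f atTop (𝓝 0)) : Tendsto (fun x => hankel φ f (-x)) atTop (𝓝 0) := by
  simp only [hankel_neg_eq_integral]
  set F := (Ioi (0 : ℝ)).indicator f
  have hF : MemLp F ∞ := (memLp_indicator_iff_restrict measurableSet_Ioi).2 hf
  have hFtop : Tendsto F atTop (𝓝 0) :=
    htop.congr' ((eventually_gt_atTop 0).mono fun y hy => (indicator_of_mem hy f).symm)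
  obtain ⟨B, hB⟩ := exists_ae_norm_le_of_memLp_top hF
  have hshift (x : ℝ) := (measurePreserving_add_right volume x).quasiMeasurePreserving
  have hlim (z : ℝ) : Tendsto (fun x => φ z * F (z + x)) atTop (𝓝 0) := by
    simpa using (hFtop.comp (tendsto_atTop_add_const_left _ z tendsto_id)).const_mul (φ z)
  have h := tendsto_integral_filter_of_dominated_convergence (fun z => ‖φ z‖ * B)
    (Eventually.of_forall fun x => hφ.1.mul (hF.1.comp_quasiMeasurePreserving (hshift x)))
    (Eventually.of_forall fun x => ((hshift x).ae hB).mono fun z hz =>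
      (norm_mul _ _).trans_le (mul_le_mul_of_nonneg_left hz (norm_nonneg (φ z))))
    (hφ.norm.mul_const B) (Eventually.of_forall hlim)
  simpa using h

end Hankel

section Gaussian

variable {t : ℝ}

lemma pker_zero_left (t z : ℝ) :
    pker t 0 z = (√(2 * π * t))⁻¹ * exp (-z ^ 2 / (2 * t)) := by
  simp only [pker, sub_zero]

lemma contDiff_pker_zero (t : ℝ) {n : WithTop ℕ∞} : ContDiff ℝ n (pker t 0) := by
  unfold pker
  fun_prop

lemma hasDerivAt_pker_zero (ht : t ≠ 0) (z : ℝ) :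
    HasDerivAt (pker t 0) (-(z / t) * pker t 0 z) z := by
  have hexp : HasDerivAt (fun z : ℝ => -z ^ 2 / (2 * t)) (-(2 * z) / (2 * t)) z := by
    simpa using (hasDerivAt_pow 2 z).neg.div_const (2 * t)
  refine ((hexp.exp.const_mul (√(2 * π * t))⁻¹).congr_of_eventuallyEq
    (Eventually.of_forall (pker_zero_left t))).congr_deriv ?_
  rw [pker_zero_left]
  field_simp

lemma exists_iteratedDeriv_pker_zero_eq (ht : t ≠ 0) (k : ℕ) :
    ∃ P : ℝ[X], iteratedDeriv k (pker t 0) = fun z => P.eval z * pker t 0 z := by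
  induction k with
  | zero => exact ⟨1, by simp⟩
  | succ k ih =>
    obtain ⟨P, hP⟩ := ih
    refine ⟨derivative P - C t⁻¹ * X * P, funext fun z => ?_⟩
    rw [iteratedDeriv_succ, hP]
    refine ((P.hasDerivAt z).mul (hasDerivAt_pker_zero ht z)).deriv.trans ?_
    simp only [eval_sub, eval_mul, eval_C, eval_X]
    ring

lemma pow_mul_pker_zero_eq (t : ℝ) (k : ℕ) : (fun z => z ^ k * pker t 0 z) =
    fun z => (√(2 * π * t))⁻¹ * (z ^ (k : ℝ) * exp (-(2 * t)⁻¹ * z ^ 2)) := by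
  ext z
  rw [pker_zero_left, rpow_natCast, neg_div, div_eq_inv_mul, neg_mul, mul_left_comm]

/-- The rate `1 / 2` is inherited from `rpow_mul_exp_neg_mul_sq_isLittleO_exp_neg`; any positive
rate would do. -/
lemma isBigO_eval_mul_pker_zero (ht : 0 < t) (P : ℝ[X]) :
    (fun z => P.eval z * pker t 0 z) =O[atTop] fun z => exp (-(1 / 2) * z) := by
  induction P using Polynomial.induction_on' with
  | add P Q hP hQ => simpa only [eval_add, add_mul] using hP.add hQ
  | monomial k a =>
    have h := (rpow_mul_exp_neg_mul_sq_isLittleO_exp_neg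
      (inv_pos.2 (mul_pos two_pos ht)) k).isBigO.const_mul_left (√(2 * π * t))⁻¹
    rw [← pow_mul_pker_zero_eq] at h
    simpa only [eval_monomial, mul_assoc] using h.const_mul_left a

lemma integrable_eval_mul_pker_zero (ht : 0 < t) (P : ℝ[X]) :
    Integrable fun z => P.eval z * pker t 0 z := by
  induction P using Polynomial.induction_on' with
  | add P Q hP hQ =>
    simp only [eval_add, add_mul]
    exact hP.add hQ
  | monomial k a =>
    have h := (integrable_rpow_mul_exp_neg_mul_sq (inv_pos.2 (mul_pos two_pos ht))
      (neg_one_lt_zero.trans_le k.cast_nonneg)).const_mul (√(2 * π * t))⁻¹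
    rw [← pow_mul_pker_zero_eq] at h
    simpa only [eval_monomial, mul_assoc] using h.const_mul a

lemma integrable_iteratedDeriv_pker_zero (ht : 0 < t) (k : ℕ) :
    Integrable (iteratedDeriv k (pker t 0)) := by
  obtain ⟨P, hP⟩ := exists_iteratedDeriv_pker_zero_eq ht.ne' k
  exact hP ▸ integrable_eval_mul_pker_zero ht P

lemma hasExpDecay_pker_zero (ht : 0 < t) (n : ℕ) : HasExpDecay (1 / 2) n (pker t 0) := by
  refine ⟨contDiff_pker_zero t, fun k _ => ?_⟩
  obtain ⟨P, hP⟩ := exists_iteratedDeriv_pker_zero_eq ht.ne' k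
  exact hP ▸ isBigO_eval_mul_pker_zero ht P

end Gaussian

section Erfc

lemma integrable_exp_neg_sq : Integrable fun y : ℝ => exp (-y ^ 2) := by
  simpa using integrable_exp_neg_mul_sq one_pos

lemma hasDerivAt_erfc (x : ℝ) : HasDerivAt erfc (-(2 / √π * exp (-x ^ 2))) x :=
  ((hasDerivAt_integral_Ioi integrable_exp_neg_sq (by fun_prop) x).const_mul
    (2 / √π)).congr_deriv (mul_neg _ _)

lemma erfc_nonneg (x : ℝ) : 0 ≤ erfc x :=
  mul_nonneg (by positivity) (integral_nonneg fun y => (exp_pos _).le)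

lemma integral_Ioi_exp_neg_sq_le {x : ℝ} (hx : 0 < x) :
    ∫ y in Ioi x, exp (-y ^ 2) ≤ exp (-x ^ 2) / (2 * x) := by
  have h2x : -(2 * x) < 0 := by linarith
  calc ∫ y in Ioi x, exp (-y ^ 2)
      ≤ ∫ y in Ioi x, exp (x ^ 2) * exp (-(2 * x) * y) := by
        refine setIntegral_mono integrable_exp_neg_sq.integrableOn
          ((integrableOn_exp_mul_Ioi h2x x).const_mul _) fun y => ?_
        rw [← exp_add]
        exact exp_le_exp.2 (by linarith [sq_nonneg (y - x)])
    _ = exp (x ^ 2) * exp (-(2 * x) * x) / (2 * x) := by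
        rw [integral_const_mul, integral_exp_mul_Ioi h2x, neg_div_neg_eq, mul_div_assoc]
    _ = exp (-x ^ 2) / (2 * x) := by rw [← exp_add]; ring_nf

lemma isBigO_erfc : erfc =O[atTop] fun x => exp (-x ^ 2) := by
  refine IsBigO.of_bound (2 / √π) ((eventually_ge_atTop 1).mono fun x hx => ?_)
  rw [norm_of_nonneg (erfc_nonneg x), norm_of_nonneg (exp_pos _).le, erfc]
  gcongr
  exact (integral_Ioi_exp_neg_sq_le (by linarith)).trans
    (div_le_self (exp_pos _).le (by linarith))

end Erfc

section BoundaryKernel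

variable {t : ℝ}

lemma exp_mul_exp_neg_sq_eq (ht : 0 < t) (θ z : ℝ) :
    exp (2 * θ * z + 2 * θ ^ 2 * t) * exp (-(z / √(2 * t) + θ * √(2 * t)) ^ 2) =
      exp (-z ^ 2 / (2 * t)) := by
  have hsq : √(2 * t) ^ 2 = 2 * t := sq_sqrt (by positivity)
  have hs : √(2 * t) ≠ 0 := by positivity
  have hsquare : (z / √(2 * t) + θ * √(2 * t)) ^ 2 =
      z ^ 2 / (2 * t) + 2 * θ * z + 2 * θ ^ 2 * t := by
    rw [add_sq, div_pow, mul_pow, hsq]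
    field_simp
  rw [← exp_add, hsquare]
  ring_nf

lemma isBigO_gfun (ht : 0 < t) (θ : ℝ) : gfun θ t =O[atTop] pker t 0 := by
  have harg : Tendsto (fun z => z / √(2 * t) + θ * √(2 * t)) atTop atTop :=
    tendsto_atTop_add_const_right _ _ (tendsto_id.atTop_div_const (by positivity))
  have h := (isBigO_refl (fun z => θ * exp (2 * θ * z + 2 * θ ^ 2 * t)) atTop).mul
    (isBigO_erfc.comp_tendsto harg)
  refine h.trans (IsBigO.of_bound (|θ| * √(2 * π * t)) (Eventually.of_forall fun z => le_of_eq ?_))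
  have : √(2 * π * t) ≠ 0 := by positivity
  simp only [Function.comp_apply, mul_assoc θ, exp_mul_exp_neg_sq_eq ht, pker_zero_left]
  simp only [norm_mul, norm_inv, norm_eq_abs, abs_exp, abs_of_nonneg (sqrt_nonneg _)]
  field_simp

lemma hasDerivAt_gfun (ht : 0 < t) (θ z : ℝ) :
    HasDerivAt (gfun θ t) (2 * θ * (gfun θ t z - pker t 0 z)) z := by
  have hexp : HasDerivAt (fun x => 2 * θ * x + 2 * θ ^ 2 * t) (2 * θ) z := by
    simpa using ((hasDerivAt_id z).const_mul (2 * θ)).add_const (2 * θ ^ 2 * t)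
  have harg : HasDerivAt (fun x => x / √(2 * t) + θ * √(2 * t)) (1 / √(2 * t)) z :=
    ((hasDerivAt_id z).div_const _).add_const _
  have hsqrt : √(2 * π * t) = √π * √(2 * t) := by
    rw [← sqrt_mul pi_pos.le]
    ring_nf
  refine ((hexp.exp.const_mul θ).mul ((hasDerivAt_erfc _).comp z harg)).congr_deriv ?_
  rw [pker_zero_left, ← exp_mul_exp_neg_sq_eq ht θ, hsqrt, gfun, Function.comp_apply]
  field_simp
  ring

lemma deriv_gfun (ht : 0 < t) (θ : ℝ) :
    deriv (gfun θ t) = fun z => 2 * θ * (gfun θ t z - pker t 0 z) :=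
  funext fun z => (hasDerivAt_gfun ht θ z).deriv

lemma hasExpDecay_gfun (ht : 0 < t) (θ : ℝ) (n : ℕ) : HasExpDecay (1 / 2) n (gfun θ t) := by
  have hdiff : Differentiable ℝ (gfun θ t) := fun z => (hasDerivAt_gfun ht θ z).differentiableAt
  have hO := (isBigO_gfun ht θ).trans (hasExpDecay_pker_zero ht 0).isBigO
  induction n with
  | zero => exact HasExpDecay.zero_iff.2 ⟨hdiff.continuous, hO⟩
  | succ n ih =>
    refine HasExpDecay.succ_iff.2 ⟨hdiff, hO, ?_⟩
    rw [deriv_gfun ht]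
    exact (ih.sub (hasExpDecay_pker_zero ht n)).const_mul (2 * θ)

lemma deriv_deriv_gfun (ht : 0 < t) (θ : ℝ) :
    deriv (deriv (gfun θ t)) =
      fun z => 2 * θ * (deriv (gfun θ t) z - deriv (pker t 0) z) := by
  ext z
  conv_lhs => rw [deriv_gfun ht]
  exact (((hasDerivAt_gfun ht θ z).differentiableAt.hasDerivAt.sub
    (hasDerivAt_pker_zero ht.ne' z).differentiableAt.hasDerivAt).const_mul (2 * θ)).deriv

end BoundaryKernel

section Semigroup

variable {t : ℝ} {f : ℝ → ℝ}

lemma Pt_eq_hankel (ht : 0 < t) (θ : ℝ) (hf : MemLp f ∞ (volume.restrict (Ioi 0))) :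
    Pt θ t f = fun x => hankel (pker t 0) f (-x) - hankel (pker t 0) f x +
      2 * hankel (gfun θ t) f x + 1 / θ * gfun θ t x * f 0 := by
  ext x
  have hp := (hasExpDecay_pker_zero ht 0).integrable_shift_mul one_half_pos hf
  have hg := (hasExpDecay_gfun ht θ 0).integrable_shift_mul one_half_pos hf x
  have hdiff : Integrable (fun y => pker t 0 (y + -x) * f y - pker t 0 (y + x) * f y)
      (volume.restrict (Ioi 0)) := (hp (-x)).sub (hp x)
  simp only [Pt, hankel]
  rw [← integral_const_mul, ← integral_sub (hp (-x)) (hp x),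
    ← integral_add hdiff (hg.const_mul 2)]
  congr 2 with y
  have h_direct : pker t x y = pker t 0 (y + -x) := by
    rw [pker, pker, sub_zero, sub_eq_add_neg]
  have h_reflected : pker t x (-y) = pker t 0 (y + x) := by
    rw [pker, pker, ← neg_add', neg_sq, sub_zero]
  rw [h_direct, h_reflected, add_comm x y]
  ring

lemma contDiff_Pt (ht : 0 < t) (θ : ℝ) (hf : MemLp f ∞ (volume.restrict (Ioi 0))) (n : ℕ) :
    ContDiff ℝ n (Pt θ t f) := by
  have hp := contDiff_hankel one_half_pos (hasExpDecay_pker_zero ht n) hf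
  have hg := hasExpDecay_gfun ht θ n
  rw [Pt_eq_hankel ht θ hf]
  exact (((hp.comp contDiff_neg).sub hp).add
    (contDiff_const.mul (contDiff_hankel one_half_pos hg hf))).add
    ((contDiff_const.mul hg.contDiff).mul contDiff_const)

lemma deriv_Pt (ht : 0 < t) (θ : ℝ) (hf : MemLp f ∞ (volume.restrict (Ioi 0))) :
    deriv (Pt θ t f) = fun x => -hankel (deriv (pker t 0)) f (-x) -
      hankel (deriv (pker t 0)) f x + 2 * hankel (deriv (gfun θ t)) f x +
      1 / θ * deriv (gfun θ t) x * f 0 := by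
  ext x
  have hp := hasExpDecay_pker_zero ht 1
  have hg := hasDerivAt_hankel one_half_pos (hasExpDecay_gfun ht θ 1) hf x
  have hgx := (hasDerivAt_gfun ht θ x).differentiableAt.hasDerivAt
  rw [Pt_eq_hankel ht θ hf]
  exact ((((hasDerivAt_hankel_neg one_half_pos hp hf x).sub
    (hasDerivAt_hankel one_half_pos hp hf x)).add (hg.const_mul 2)).add
    ((hgx.const_mul (1 / θ)).mul_const (f 0))).deriv

lemma deriv_deriv_Pt (ht : 0 < t) (θ : ℝ) (hf : MemLp f ∞ (volume.restrict (Ioi 0))) :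
    deriv (deriv (Pt θ t f)) = fun x => hankel (deriv (deriv (pker t 0))) f (-x) -
      hankel (deriv (deriv (pker t 0))) f x + 2 * hankel (deriv (deriv (gfun θ t))) f x +
      1 / θ * deriv (deriv (gfun θ t)) x * f 0 := by
  ext x
  have hp' := (HasExpDecay.succ_iff.1 (hasExpDecay_pker_zero ht 2)).2.2
  have hg' := (HasExpDecay.succ_iff.1 (hasExpDecay_gfun ht θ 2)).2.2
  have hg := hasDerivAt_hankel one_half_pos hg' hf x
  have hgx := (hg'.contDiff.differentiable one_ne_zero x).hasDerivAt
  rw [deriv_Pt ht θ hf]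
  refine ((((hasDerivAt_hankel_neg one_half_pos hp' hf x).neg.sub
    (hasDerivAt_hankel one_half_pos hp' hf x)).add (hg.const_mul 2)).add
    ((hgx.const_mul (1 / θ)).mul_const (f 0))).deriv.trans ?_
  rw [neg_neg]

lemma deriv_deriv_Pt_zero (ht : 0 < t) (θ : ℝ) (hf : MemLp f ∞ (volume.restrict (Ioi 0))) :
    deriv (deriv (Pt θ t f)) 0 = 2 * θ * deriv (Pt θ t f) 0 := by
  have hp' := (HasExpDecay.succ_iff.1 (hasExpDecay_pker_zero ht 1)).2.2
  have hg' := (HasExpDecay.succ_iff.1 (hasExpDecay_gfun ht θ 1)).2.2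
  have hp0 : deriv (pker t 0) 0 = 0 := by simp [(hasDerivAt_pker_zero ht.ne' 0).deriv]
  rw [deriv_deriv_Pt ht θ hf, deriv_Pt ht θ hf, deriv_deriv_gfun ht]
  beta_reduce
  rw [hankel_const_mul_sub one_half_pos hg' hp' hf, hp0, neg_zero]
  ring

lemma tendsto_Pt_atTop (ht : 0 < t) (θ : ℝ) (hf : MemLp f ∞ (volume.restrict (Ioi 0)))
    (htop : Tendsto f atTop (𝓝 0)) : Tendsto (Pt θ t f) atTop (𝓝 0) := by
  have hp := hasExpDecay_pker_zero ht 0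
  have hg := hasExpDecay_gfun ht θ 0
  have hpi : Integrable (pker t 0) := by simpa using integrable_iteratedDeriv_pker_zero ht 0
  rw [Pt_eq_hankel ht θ hf]
  simpa using (((tendsto_hankel_neg_atTop hpi hf htop).sub
    (tendsto_hankel_atTop one_half_pos hp hf)).add
    ((tendsto_hankel_atTop one_half_pos hg hf).const_mul 2)).add
    (((hg.tendsto_atTop one_half_pos).const_mul (1 / θ)).mul_const (f 0))

lemma tendsto_deriv_deriv_Pt_atTop (ht : 0 < t) (θ : ℝ)
    (hf : MemLp f ∞ (volume.restrict (Ioi 0))) (htop : Tendsto f atTop (𝓝 0)) :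
    Tendsto (deriv (deriv (Pt θ t f))) atTop (𝓝 0) := by
  have second_deriv {φ : ℝ → ℝ} (h : HasExpDecay (1 / 2) 2 φ) :
      HasExpDecay (1 / 2) 0 (deriv (deriv φ)) :=
    (HasExpDecay.succ_iff.1 (HasExpDecay.succ_iff.1 h).2.2).2.2
  have hp := second_deriv (hasExpDecay_pker_zero ht 2)
  have hg := second_deriv (hasExpDecay_gfun ht θ 2)
  have hpi : Integrable (deriv (deriv (pker t 0))) := by
    simpa only [iteratedDeriv_succ, iteratedDeriv_zero] using
      integrable_iteratedDeriv_pker_zero ht 2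
  rw [deriv_deriv_Pt ht θ hf]
  simpa using (((tendsto_hankel_neg_atTop hpi hf htop).sub
    (tendsto_hankel_atTop one_half_pos hp hf)).add
    ((tendsto_hankel_atTop one_half_pos hg hf).const_mul 2)).add
    (((hg.tendsto_atTop one_half_pos).const_mul (1 / θ)).mul_const (f 0))

end Semigroup

lemma memS.memLp_top {f : ℝ → ℝ} (hf : memS f) : MemLp f ∞ (volume.restrict (Ioi 0)) := by
  obtain ⟨hC2, ⟨a, ha⟩, -, -, htop⟩ := hf
  obtain ⟨B, hB⟩ := exists_norm_le_Ioi_of_tendsto hC2.continuousOn ha htop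
  exact memLp_top_of_bound (hC2.continuousOn.aestronglyMeasurable measurableSet_Ioi) B
    (ae_restrict_of_forall_mem measurableSet_Ioi hB)

theorem Pt_mem_DA_general {θ t : ℝ} (_hθ : θ ≠ 0) (ht : 0 < t) {f : ℝ → ℝ}
    (hf : MemLp f ∞ (volume.restrict (Ioi 0))) (htop : Tendsto f atTop (𝓝 0)) :
    ContDiffOn ℝ 2 (Pt θ t f) (Ioi 0) ∧ ContinuousOn (Pt θ t f) (Ici 0) ∧
    Tendsto (Pt θ t f) atTop (𝓝 0) ∧
    (∃ L M : ℝ, Tendsto (deriv (Pt θ t f)) (𝓝[>] 0) (𝓝 L) ∧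
      Tendsto (deriv (deriv (Pt θ t f))) (𝓝[>] 0) (𝓝 M) ∧ M = 2 * θ * L) ∧
    Tendsto (deriv (deriv (Pt θ t f))) atTop (𝓝 0) := by
  have hC2 : ContDiff ℝ 2 (Pt θ t f) := contDiff_Pt ht θ hf 2
  have hderiv : Continuous (deriv (Pt θ t f)) := hC2.continuous_deriv one_le_two
  have hderiv₂ : Continuous (deriv (deriv (Pt θ t f))) :=
    (hC2.deriv' (n := 1)).continuous_deriv le_rfl
  exact ⟨hC2.contDiffOn, hC2.continuous.continuousOn, tendsto_Pt_atTop ht θ hf htop,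
    ⟨_, _, (hderiv.tendsto 0).mono_left nhdsWithin_le_nhds,
      (hderiv₂.tendsto 0).mono_left nhdsWithin_le_nhds, deriv_deriv_Pt_zero ht θ hf⟩,
    tendsto_deriv_deriv_Pt_atTop ht θ hf htop⟩

/-- For `f ∈ 𝒮`, `P_t f ∈ 𝒟(𝒜)`: `P_t f` is C² on `(0,∞)`, continuous on `[0,∞)` with
`lim_{x→∞} P_t f(x) = 0`, the one-sided limits `(P_t f)'(0⁺)` and `(P_t f)''(0⁺)` exist and
are finite, `(P_t f)''(0⁺) = 2θ·(P_t f)'(0⁺)`, and `lim_{x→∞} (P_t f)''(x) = 0`. -/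
theorem Pt_mem_DA (θ t : ℝ) (hθ : 0 < θ) (ht : 0 < t)
    (f : ℝ → ℝ) (hf : memS f) :
    ContDiffOn ℝ 2 (Pt θ t f) (Set.Ioi 0) ∧
    ContinuousOn (Pt θ t f) (Set.Ici 0) ∧
    Filter.Tendsto (Pt θ t f) Filter.atTop (nhds 0) ∧
    (∃ L M : ℝ,
      Filter.Tendsto (deriv (Pt θ t f)) (nhdsWithin 0 (Set.Ioi 0)) (nhds L) ∧
      Filter.Tendsto (deriv (deriv (Pt θ t f))) (nhdsWithin 0 (Set.Ioi 0)) (nhds M) ∧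
      M = 2 * θ * L) ∧
    Filter.Tendsto (deriv (deriv (Pt θ t f))) Filter.atTop (nhds 0) :=
  Pt_mem_DA_general hθ.ne' ht hf.memLp_top hf.2.2.2.2
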